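/- arXiv:2603.27072 — 2 statements merged into one kernel-verified Lean document; each statement's English description precedes it below -/
import Mathlib

section
/- Let L ≥ 3 be an integer, λ > 0, q := 2/L, and let φ_m(ρ) := (m − ρ)² + λ|ρ|^q for ρ ∈ ℝ, with threshold τ := (1 − q/2)·λ^{1/(2−q)}·(1 − q)^{(q−1)/(2−q)}. If |m| < τ, then 0 is the unique global minimizer of φ_m over ℝ. If |m| > τ, then φ_m has a unique global minimizer ρ*(m) over ℝ, this minimizer is nonzero, and it has the same sign as m. -/
/-- `φ_m(ρ) = (m − ρ)² + λ|ρ|^q`. -/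
noncomputable def phi (m lam q ρ : ℝ) : ℝ := (m - ρ) ^ 2 + lam * |ρ| ^ q

theorem aux_bern {q s : ℝ} (hq1 : q < 1) (hs : 0 < s) : 1 + (q - 1) * (s - 1) ≤ s ^ (q - 1) := by
  have h1 := Real.log_le_sub_one_of_pos hs
  have h2 := Real.add_one_le_exp (Real.log s * (q - 1))
  rw [Real.rpow_def_of_pos hs]
  nlinarith

theorem aux_strict {q a x : ℝ} (hq1 : q < 1) (ha : 0 < a) (hx : 0 < x) (hne : x ≠ a) :
    a ^ (q - 1) + (q - 1) * a ^ (q - 2) * (x - a) < x ^ (q - 1) := by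
  have hs : 0 < x / a := div_pos hx ha
  have hs1 : x / a ≠ 1 := by
    intro h
    rw [div_eq_one_iff_eq ha.ne'] at h
    exact hne h
  have h1 := Real.log_lt_sub_one_of_pos hs hs1
  have h2 := Real.add_one_le_exp (Real.log (x / a) * (q - 1))
  have h3 : 1 + (q - 1) * (x / a - 1) < (x / a) ^ (q - 1) := by
    rw [Real.rpow_def_of_pos hs]
    nlinarith
  have h4 : x ^ (q - 1) = a ^ (q - 1) * (x / a) ^ (q - 1) := by
    rw [← Real.mul_rpow ha.le hs.le]
    congr 1
    field_simp
  have h5 : a ^ (q - 2) = a ^ (q - 1) / a := by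
    rw [← Real.rpow_sub_one ha.ne']
    congr 1
    ring
  have h6 : 0 < a ^ (q - 1) := Real.rpow_pos_of_pos ha _
  rw [h4, h5]
  have h7 := mul_lt_mul_of_pos_left h3 h6
  calc _ = a ^ (q - 1) * (1 + (q - 1) * (x / a - 1)) := by field_simp
    _ < _ := h7

theorem aux_tau {lam q τ : ℝ} (hlam : 0 < lam) (hq0 : 0 < q) (hq1 : q < 1)
    (hτ : τ = (1 - q / 2) * lam ^ (1 / (2 - q)) * (1 - q) ^ ((q - 1) / (2 - q))) :
    0 < τ ∧ (∀ x : ℝ, 0 < x → 2 * τ ≤ x + lam * x ^ (q - 1)) ∧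
      ∃ r : ℝ, 0 < r ∧ r + lam * r ^ (q - 1) = 2 * τ := by
  have h1q : 0 < 1 - q := by linarith
  have h2q : 0 < 2 - q := by linarith
  have hc : 0 < lam * (1 - q) := mul_pos hlam h1q
  obtain ⟨r, hr⟩ : ∃ r, r = (lam * (1 - q)) ^ (1 / (2 - q)) := ⟨_, rfl⟩
  have hr0 : 0 < r := hr ▸ Real.rpow_pos_of_pos hc _
  have hr2 : lam * (1 - q) * r ^ (q - 2) = 1 := by
    rw [hr, ← Real.rpow_mul hc.le]
    have : 1 / (2 - q) * (q - 2) = -1 := by field_simp; ring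
    rw [this, Real.rpow_neg_one]
    field_simp
  have hr1 : lam * (1 - q) * r ^ (q - 1) = r := by
    have : q - 2 = (q - 1) - 1 := by ring
    rw [this, Real.rpow_sub_one hr0.ne'] at hr2
    field_simp at hr2
    linarith
  have htr : 2 * τ * (1 - q) = (2 - q) * r := by
    rw [hτ, hr, Real.mul_rpow hlam.le h1q.le]
    have : (q - 1) / (2 - q) = 1 / (2 - q) - 1 := by field_simp; ring
    rw [this, Real.rpow_sub_one h1q.ne']
    field_simp
  have heq : r + lam * r ^ (q - 1) = 2 * τ := by
    apply mul_right_cancel₀ h1q.ne'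
    rw [htr]
    linarith
  refine ⟨?_, ?_, r, hr0, heq⟩
  · have := mul_pos h2q hr0
    by_contra h
    push Not at h
    nlinarith
  · intro x hx
    rw [← heq]
    by_cases hxr : x = r
    · rw [hxr]
    have := mul_lt_mul_of_pos_left (aux_strict hq1 hr0 hx hxr) hlam
    have e : lam * ((q - 1) * r ^ (q - 2) * (x - r)) = -(x - r) := by
      linear_combination (-(x - r)) * hr2
    linarith

theorem phi_zero {m lam q : ℝ} (hq0 : 0 < q) : phi m lam q 0 = m ^ 2 := by
  simp [phi, Real.zero_rpow hq0.ne']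

theorem phi_neg (m lam q ρ : ℝ) : phi (-m) lam q (-ρ) = phi m lam q ρ := by
  simp only [phi, abs_neg]
  ring

theorem phi_pos {m lam q x : ℝ} (hx : 0 < x) :
    phi m lam q x = m ^ 2 + x * (x + lam * x ^ (q - 1) - 2 * m) := by
  rw [phi, abs_of_pos hx, Real.rpow_sub_one hx.ne']
  field_simp
  ring

theorem phi_low {m lam q τ x : ℝ} (hlam : 0 < lam) (hq0 : 0 < q) (hq1 : q < 1)
    (hτ : τ = (1 - q / 2) * lam ^ (1 / (2 - q)) * (1 - q) ^ ((q - 1) / (2 - q)))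
    (hm : |m| < τ) (hx : x ≠ 0) : phi m lam q 0 < phi m lam q x := by
  obtain ⟨-, h, -⟩ := aux_tau hlam hq0 hq1 hτ
  obtain ⟨hm1, hm2⟩ := abs_lt.1 hm
  rw [phi_zero hq0]
  rcases hx.lt_or_gt with hx | hx
  · rw [← phi_neg, phi_pos (neg_pos.2 hx)]
    have := h (-x) (by linarith)
    have := mul_pos (neg_pos.2 hx) (show 0 < -x + lam * (-x) ^ (q - 1) - 2 * (-m) by linarith)
    nlinarith
  · rw [phi_pos hx]
    have := h x hx
    have := mul_pos hx (show 0 < x + lam * x ^ (q - 1) - 2 * m by linarith)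
    linarith

theorem phi_deriv {m lam q x : ℝ} (hx : 0 < x) :
    HasDerivAt (phi m lam q) (2 * (x - m) + lam * (q * x ^ (q - 1))) x := by
  have h : HasDerivAt (fun y : ℝ => (m - y) ^ 2 + lam * y ^ q)
      (2 * (x - m) + lam * (q * x ^ (q - 1))) x := by
    have h1 := (((hasDerivAt_id x).const_sub m).pow 2).add
      ((Real.hasDerivAt_rpow_const (p := q) (Or.inl hx.ne')).const_mul lam)
    refine h1.congr_deriv ?_
    simp only [id_eq]
    push_cast
    ring
  apply h.congr_of_eventuallyEq
  filter_upwards [lt_mem_nhds hx] with y hy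
  rw [phi, abs_of_pos hy]

theorem phi_uniq {m lam q a b : ℝ} (hlam : 0 < lam) (hq0 : 0 < q) (hq1 : q < 1)
    (ha0 : 0 < a) (hab : a < b)
    (ha : ∀ x, phi m lam q a ≤ phi m lam q x) (hb : ∀ x, phi m lam q b ≤ phi m lam q x) :
    False := by
  have hb0 := ha0.trans hab
  have da : 2 * (a - m) + lam * (q * a ^ (q - 1)) = 0 :=
    IsLocalMin.hasDerivAt_eq_zero (Filter.Eventually.of_forall ha) (phi_deriv ha0)
  have db : 2 * (b - m) + lam * (q * b ^ (q - 1)) = 0 :=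
    IsLocalMin.hasDerivAt_eq_zero (Filter.Eventually.of_forall hb) (phi_deriv hb0)
  have hanti : StrictAntiOn (phi m lam q) (Set.Icc a b) := by
    apply strictAntiOn_of_deriv_neg (convex_Icc a b)
    · intro x hx
      exact (phi_deriv (ha0.trans_le hx.1)).continuousAt.continuousWithinAt
    · intro x hx
      rw [interior_Icc] at hx
      obtain ⟨h1, h2⟩ := hx
      have hx0 := ha0.trans h1
      rw [(phi_deriv hx0).deriv]
      have ea := aux_strict hq1 hx0 ha0 h1.ne
      have eb := aux_strict hq1 hx0 hb0 h2.ne'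
      have hlq := mul_pos hlam hq0
      have ea' := mul_lt_mul_of_pos_left ea hlq
      have eb' := mul_lt_mul_of_pos_left eb hlq
      obtain ⟨S, hS⟩ : ∃ S, S = lam * q * ((q - 1) * x ^ (q - 2)) := ⟨_, rfl⟩
      have e1 : 2 * (x - m) + lam * (q * x ^ (q - 1)) + (2 + S) * (a - x) < 0 := by
        rw [hS]; linarith
      have e2 : 2 * (x - m) + lam * (q * x ^ (q - 1)) + (2 + S) * (b - x) < 0 := by
        rw [hS]; linarith
      by_contra h
      push Not at h
      rcases le_total 0 (2 + S) with hs | hs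
      · have := mul_nonneg hs (sub_nonneg.2 h2.le)
        linarith
      · have := mul_nonneg_of_nonpos_of_nonpos hs (sub_nonpos.2 h1.le)
        linarith
  have := hanti (Set.left_mem_Icc.2 hab.le) (Set.right_mem_Icc.2 hab.le) hab
  exact absurd (ha b) (not_le.2 this)

theorem phi_exists {lam q : ℝ} (m : ℝ) (hlam : 0 < lam) (hq0 : 0 < q) :
    ∃ ρ, ∀ x, phi m lam q ρ ≤ phi m lam q x := by
  have hc : Continuous (phi m lam q) := by
    unfold phi
    exact ((continuous_const.sub continuous_id).pow 2).add
      (continuous_const.mul (continuous_abs.rpow_const fun _ => Or.inr hq0.le))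
  have h0 : (0 : ℝ) ∈ Metric.closedBall m |m| := by simp [Real.dist_eq]
  obtain ⟨ρ, -, hρ⟩ := (isCompact_closedBall m |m|).exists_isMinOn ⟨0, h0⟩ hc.continuousOn
  refine ⟨ρ, fun x => ?_⟩
  by_cases hx : x ∈ Metric.closedBall m |m|
  · exact hρ hx
  · have h1 : phi m lam q ρ ≤ phi m lam q 0 := hρ h0
    rw [phi_zero hq0] at h1
    rw [Metric.mem_closedBall, Real.dist_eq, not_le] at hx
    have h2 := sq_lt_sq.2 hx
    have h3 : 0 ≤ lam * |x| ^ q := mul_nonneg hlam.le (Real.rpow_nonneg (abs_nonneg x) q)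
    have h4 : phi m lam q x = (m - x) ^ 2 + lam * |x| ^ q := rfl
    nlinarith

theorem phi_high {m lam q τ : ℝ} (hlam : 0 < lam) (hq0 : 0 < q) (hq1 : q < 1)
    (hτ : τ = (1 - q / 2) * lam ^ (1 / (2 - q)) * (1 - q) ^ ((q - 1) / (2 - q)))
    (hm : τ < m) : ∃ ρstar : ℝ, (∀ x : ℝ, phi m lam q ρstar ≤ phi m lam q x) ∧ 0 < ρstar ∧
        (∀ ρ : ℝ, (∀ x : ℝ, phi m lam q ρ ≤ phi m lam q x) → ρ = ρstar) := by
  obtain ⟨hτ0, -, r, hr0, hr⟩ := aux_tau hlam hq0 hq1 hτ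
  have hpos : ∀ ρ : ℝ, (∀ x : ℝ, phi m lam q ρ ≤ phi m lam q x) → 0 < ρ := by
    intro ρ h
    by_contra hn
    have h1 := h r
    rw [phi_pos hr0] at h1
    have h2 := mul_pos hr0 (show 0 < 2 * m - (r + lam * r ^ (q - 1)) by linarith)
    have h3 : 0 ≤ lam * |ρ| ^ q := mul_nonneg hlam.le (Real.rpow_nonneg (abs_nonneg ρ) q)
    rw [phi] at h1
    push Not at hn
    nlinarith [mul_nonneg (hτ0.trans hm).le (neg_nonneg.2 hn), sq_nonneg ρ]
  obtain ⟨ρ, hρ⟩ := phi_exists m hlam hq0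
  refine ⟨ρ, hρ, hpos ρ hρ, fun s hs => ?_⟩
  rcases lt_trichotomy s ρ with h | h | h
  · exact (phi_uniq hlam hq0 hq1 (hpos s hs) h hs hρ).elim
  · exact h
  · exact (phi_uniq hlam hq0 hq1 (hpos ρ hρ) h hρ hs).elim

/-- For `L ≥ 3`, `λ > 0`, `q = 2/L` and threshold
`τ = (1 − q/2)·λ^{1/(2−q)}·(1 − q)^{(q−1)/(2−q)}`:
if `|m| < τ` then `0` is the unique global minimizer of `φ_m`;
if `|m| > τ` then `φ_m` has a unique global minimizer, which is nonzero and
has the same sign as `m`. -/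
theorem stmt1 (L : ℕ) (hL : 3 ≤ L) (lam : ℝ) (hlam : 0 < lam) (m q τ : ℝ)
    (hq : q = 2 / L)
    (hτ : τ = (1 - q / 2) * lam ^ (1 / (2 - q)) * (1 - q) ^ ((q - 1) / (2 - q))) :
    (|m| < τ →
      (∀ x : ℝ, phi m lam q 0 ≤ phi m lam q x) ∧
      (∀ ρ : ℝ, (∀ x : ℝ, phi m lam q ρ ≤ phi m lam q x) → ρ = 0)) ∧
    (τ < |m| →
      ∃ ρstar : ℝ, (∀ x : ℝ, phi m lam q ρstar ≤ phi m lam q x) ∧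
        ρstar ≠ 0 ∧ Real.sign ρstar = Real.sign m ∧
        (∀ ρ : ℝ, (∀ x : ℝ, phi m lam q ρ ≤ phi m lam q x) → ρ = ρstar)) := by
  have hL' : (3 : ℝ) ≤ L := by exact_mod_cast hL
  have hq0 : 0 < q := by rw [hq]; positivity
  have hq1 : q < 1 := by
    rw [hq, div_lt_one (by linarith)]
    linarith
  refine ⟨fun hm => ⟨fun x => ?_, fun ρ h => ?_⟩, fun hm => ?_⟩
  · by_cases hx : x = 0
    · rw [hx]
    · exact (phi_low hlam hq0 hq1 hτ hm hx).le
  · by_contra hρ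
    exact absurd (h 0) (not_le.2 (phi_low hlam hq0 hq1 hτ hm hρ))
  · have hτ0 := (aux_tau hlam hq0 hq1 hτ).1
    rcases le_or_gt 0 m with h0 | h0
    · rw [abs_of_nonneg h0] at hm
      obtain ⟨ρ, h1, h2, h3⟩ := phi_high hlam hq0 hq1 hτ hm
      refine ⟨ρ, h1, h2.ne', ?_, h3⟩
      rw [Real.sign_of_pos h2, Real.sign_of_pos (hτ0.trans hm)]
    · rw [abs_of_neg h0] at hm
      obtain ⟨ρ, h1, h2, h3⟩ := phi_high hlam hq0 hq1 hτ hm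
      have key : ∀ y, phi m lam q y = phi (-m) lam q (-y) := fun y => (phi_neg m lam q y).symm
      refine ⟨-ρ, fun x => ?_, (neg_neg_of_pos h2).ne, ?_, fun s hs => ?_⟩
      · rw [key, key, neg_neg]
        exact h1 _
      · rw [Real.sign_of_neg (neg_neg_of_pos h2), Real.sign_of_neg h0]
      · have := h3 (-s) (fun x => by
          have := hs (-x)
          rwa [key, key, neg_neg] at this)
        linarith
end

section
/- Let L ≥ 3 be an integer, λ > 0, q := 2/L, and let M♮ ∈ ℝ^{m × n} with r := min{m,n}. Define the threshold τ := (1 − q/2)·λ^{1/(2−q)}·(1 − q)^{(q−1)/(2−q)}. If σ_i(M♮) ≠ τ for every i ∈ {1, …, r}, then the Schatten-regularized objective 𝓛_{M♮}(M) := ‖M♮ − M‖_F² + λ·‖M‖_{S^{2/L}}^{2/L} has exactly one global minimizer over ℝ^{m × n}. -/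
open Matrix

/-- The `i`-th largest singular value of a real matrix `A` (`0`-indexed),
i.e. the non-increasing rearrangement of the square roots of the
eigenvalues of the positive semidefinite matrix `Aᵀ A`. -/
noncomputable def singularValue {m n : ℕ} (A : Matrix (Fin m) (Fin n) ℝ) (i : Fin (min m n)) : ℝ :=
  let ev : Fin n → ℝ := fun j => Real.sqrt ((Matrix.isHermitian_conjTranspose_mul_self A).eigenvalues j)
  (ev ∘ Tuple.sort ev) ((Fin.castLE (Nat.min_le_right m n) i).rev)

/-- Frobenius norm of a real matrix. -/
noncomputable def frobNorm {m n : ℕ} (A : Matrix (Fin m) (Fin n) ℝ) : ℝ :=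
  Real.sqrt (∑ i, ∑ j, (A i j) ^ 2)

/-- `‖A‖_{S^q}^q = ∑_{i=1}^{min m n} σ_i(A)^q`. -/
noncomputable def schattenPow {m n : ℕ} (A : Matrix (Fin m) (Fin n) ℝ) (q : ℝ) : ℝ :=
  ∑ i : Fin (min m n), (singularValue A i) ^ q

/-- Schatten-`q` quasi-norm `‖A‖_{S^q} = (∑ σ_i(A)^q)^{1/q}`. -/
noncomputable def schattenNorm {m n : ℕ} (A : Matrix (Fin m) (Fin n) ℝ) (q : ℝ) : ℝ :=
  (schattenPow A q) ^ (1 / q)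

/-- `chainProd d W L = W_{L-1} * ⋯ * W_1 * W_0` (the end-to-end product of the
first `L` layers, `W_i : ℝ^{d_{i+1} × d_i}`). -/
noncomputable def chainProd (d : ℕ → ℕ) (W : ∀ i : ℕ, Matrix (Fin (d (i + 1))) (Fin (d i)) ℝ) :
    (L : ℕ) → Matrix (Fin (d L)) (Fin (d 0)) ℝ
  | 0 => 1
  | (L + 1) => W L * chainProd d W L

/-- The ℓ²-regularized deep matrix factorization objective
`𝓛(W) = ‖M♮ − W_L ⋯ W_1‖_F² + (λ/L) ∑ᵢ ‖W_i‖_F²`. -/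
noncomputable def deepLoss (L : ℕ) (lam : ℝ) (d : ℕ → ℕ)
    (Mnat : Matrix (Fin (d L)) (Fin (d 0)) ℝ)
    (W : ∀ i : ℕ, Matrix (Fin (d (i + 1))) (Fin (d i)) ℝ) : ℝ :=
  frobNorm (Mnat - chainProd d W L) ^ 2 + (lam / L) * ∑ i : Fin L, frobNorm (W i.1) ^ 2

/-- The Schatten-regularized objective
`𝓛_{M♮}(M) = ‖M♮ − M‖_F² + λ‖M‖_{S^{2/L}}^{2/L}`. -/
noncomputable def schattenLoss (L : ℕ) (lam : ℝ) {m n : ℕ}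
    (Mnat M : Matrix (Fin m) (Fin n) ℝ) : ℝ :=
  frobNorm (Mnat - M) ^ 2 + lam * schattenPow M (2 / L)


theorem scal_lt (q x0 x : ℝ) (hq1 : q < 1) (hx0 : 0 < x0) (lam : ℝ)
    (hl : lam * (1 - q) = x0 ^ (2 - q)) (hx : 0 < x) :
    x0 * (2 - q) * x ≤ (1 - q) * (x ^ 2 + lam * x ^ q) := by
  set r := x / x0 with hr
  have hrpos : 0 < r := by positivity
  have hxr : x = r * x0 := by rw [hr]; field_simp
  have h1 : (1 + (q - 1) * (r - 1)) * r ≤ r ^ q := by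
    have e1 : r ^ q = r ^ (q - 1) * r := by
      rw [← Real.rpow_add_one hrpos.ne']; ring_nf
    rw [e1]
    gcongr
    rw [Real.rpow_def_of_pos hrpos]
    have h2 := Real.add_one_le_exp (Real.log r * (q - 1))
    have h3 := Real.log_le_sub_one_of_pos hrpos
    nlinarith
  have h2 : (1 - q) * (lam * x ^ q) = x0 ^ 2 * r ^ q := by
    have : x0 ^ (2:ℕ) = x0 ^ (2 - q) * x0 ^ q := by
      rw [← Real.rpow_add hx0, ← Real.rpow_natCast]; norm_num
    rw [hxr, Real.mul_rpow hrpos.le hx0.le, this, ← hl]; ring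
  have : (1 - q) * (x ^ 2 + lam * x ^ q) = (1 - q) * x ^ 2 + x0 ^ 2 * r ^ q := by
    rw [← h2]; ring
  rw [this, hxr]
  have h3 : x0 ^ 2 * ((1 + (q - 1) * (r - 1)) * r) ≤ x0 ^ 2 * r ^ q := by gcongr
  nlinarith

theorem scal_eq (q x0 : ℝ) (hx0 : 0 < x0) (lam : ℝ)
    (hl : lam * (1 - q) = x0 ^ (2 - q)) :
    x0 * (2 - q) * x0 = (1 - q) * (x0 ^ 2 + lam * x0 ^ q) := by
  have : x0 ^ (2:ℕ) = x0 ^ (2 - q) * x0 ^ q := by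
    rw [← Real.rpow_add hx0, ← Real.rpow_natCast]; norm_num
  have h : (1 - q) * (x0 ^ 2 + lam * x0 ^ q) = (1-q) * x0 ^ 2 + (lam * (1 - q)) * x0 ^ q := by ring
  rw [h, hl, ← this]; ring

theorem scal_exists (q lam s : ℝ) (hq0 : 0 < q) (hl : 0 < lam) (hs : 0 ≤ s) :
    ∃ x, 0 ≤ x ∧ ∀ y, 0 ≤ y → (s - x) ^ 2 + lam * x ^ q ≤ (s - y) ^ 2 + lam * y ^ q := by
  have hc : ContinuousOn (fun x : ℝ => (s - x) ^ 2 + lam * x ^ q) (Set.Icc 0 s) := by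
    apply Continuous.continuousOn
    have := Real.continuous_rpow_const hq0.le
    fun_prop
  obtain ⟨x, hx, hm⟩ := isCompact_Icc.exists_isMinOn ⟨0, by simp [hs]⟩ hc
  refine ⟨x, hx.1, fun y hy => ?_⟩
  by_cases hys : y ≤ s
  · exact hm (show y ∈ Set.Icc 0 s from ⟨hy, hys⟩)
  · have h1 := hm (show s ∈ Set.Icc 0 s from ⟨hs, le_rfl⟩)
    simp only [Set.mem_ofPred_eq] at h1
    have h2 : s ^ q ≤ y ^ q := Real.rpow_le_rpow hs (by linarith) hq0.le
    nlinarith [sq_nonneg (s - y)]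

theorem rpow_tangent (p : ℝ) (hp : p < 0) (z w : ℝ) (hz : 0 < z) (hw : 0 < w) (h : w ≠ z) :
    z ^ p * (1 + p * (w / z - 1)) < w ^ p := by
  have hr : 0 < w / z := by positivity
  have hr1 : w / z ≠ 1 := by rwa [Ne, div_eq_one_iff_eq hz.ne']
  have e : w ^ p = z ^ p * (w / z) ^ p := by
    rw [← Real.mul_rpow hz.le hr.le]; congr 1; field_simp
  rw [e]
  have hzp : 0 < z ^ p := by positivity
  apply mul_lt_mul_of_pos_left _ hzp
  rw [Real.rpow_def_of_pos hr]
  have h2 := Real.add_one_le_exp (Real.log (w / z) * p)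
  have h3 := Real.log_lt_sub_one_of_pos hr hr1
  nlinarith

theorem scal_pos_unique (q lam s : ℝ) (hq0 : 0 < q) (hq1 : q < 1) (hl : 0 < lam)
    (x y : ℝ) (hx : 0 < x) (hxy : x < y)
    (hxm : ∀ z, 0 ≤ z → (s - x) ^ 2 + lam * x ^ q ≤ (s - z) ^ 2 + lam * z ^ q)
    (hym : ∀ z, 0 ≤ z → (s - y) ^ 2 + lam * y ^ q ≤ (s - z) ^ 2 + lam * z ^ q) : False := by
  set f : ℝ → ℝ := fun z => (s - z) ^ 2 + lam * z ^ q with hf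
  have hd : ∀ z, 0 < z → HasDerivAt f (2 * (z - s) + lam * (q * z ^ (q - 1))) z := by
    intro z hz
    have h1 := (Real.hasDerivAt_rpow_const (p := q) (Or.inl hz.ne')).const_mul lam
    have h2 := ((hasDerivAt_id z).const_sub s).pow 2
    refine (h2.add h1).congr_deriv ?_
    simp only [id]; norm_num; ring
  have hz : ∀ z, 0 < z → (∀ w, 0 ≤ w → f z ≤ f w) → 2 * (z - s) + lam * (q * z ^ (q - 1)) = 0 := by
    intro z hz hm
    refine IsLocalMin.hasDerivAt_eq_zero ?_ (hd z hz)
    filter_upwards [lt_mem_nhds hz] with w hw using hm w hw.le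
  have hx' := hz x hx hxm
  have hy' := hz y (hx.trans hxy) hym
  have hanti : StrictAntiOn f (Set.Icc x y) := by
    apply strictAntiOn_of_deriv_neg (convex_Icc _ _)
    · intro z hz
      exact (hd z (hx.trans_le hz.1)).continuousAt.continuousWithinAt
    · intro z hz
      rw [interior_Icc] at hz
      have hzp := hx.trans hz.1
      rw [(hd z hzp).deriv]
      have hX := rpow_tangent (q - 1) (by linarith) z x hzp hx hz.1.ne
      have hY := rpow_tangent (q - 1) (by linarith) z y hzp (hx.trans hxy) hz.2.ne'
      have hzx : 0 < z - x := sub_pos.2 hz.1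
      have hyz : 0 < y - z := sub_pos.2 hz.2
      have h1 := mul_lt_mul_of_pos_right hX hyz
      have h2 := mul_lt_mul_of_pos_right hY hzx
      have e : z ^ (q - 1) * (1 + (q - 1) * (x / z - 1)) * (y - z)
          + z ^ (q - 1) * (1 + (q - 1) * (y / z - 1)) * (z - x) = z ^ (q - 1) * (y - x) := by
        field_simp; ring
      have h3 : z ^ (q - 1) * (y - x) < x ^ (q - 1) * (y - z) + y ^ (q - 1) * (z - x) := by
        linarith
      have h4 := mul_lt_mul_of_pos_left h3 (mul_pos hl hq0)
      have h5 : (2 * (z - s) + lam * (q * z ^ (q - 1))) * (y - x) < 0 := by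
        have hx'' : (2 * (x - s) + lam * (q * x ^ (q - 1))) * (y - z) = 0 := by rw [hx', zero_mul]
        have hy'' : (2 * (y - s) + lam * (q * y ^ (q - 1))) * (z - x) = 0 := by rw [hy', zero_mul]
        linarith
      exact neg_of_mul_neg_left h5 (by linarith)
  have h := hanti (Set.left_mem_Icc.2 hxy.le) (Set.right_mem_Icc.2 hxy.le) hxy
  exact absurd (hxm y (hx.trans hxy).le) (not_le.2 h)

theorem scal_main (q lam τ s : ℝ) (hq0 : 0 < q) (hq1 : q < 1) (hl : 0 < lam)
    (hτ : τ = (1 - q / 2) * lam ^ (1 / (2 - q)) * (1 - q) ^ ((q - 1) / (2 - q)))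
    (hs : 0 ≤ s) (hsτ : s ≠ τ) :
    ∃ x, 0 ≤ x ∧ (∀ y, 0 ≤ y → (s - x) ^ 2 + lam * x ^ q ≤ (s - y) ^ 2 + lam * y ^ q) ∧
      ∀ y, 0 ≤ y → (s - y) ^ 2 + lam * y ^ q ≤ (s - x) ^ 2 + lam * x ^ q → y = x := by
  set x0 := (lam * (1 - q)) ^ (1 / (2 - q)) with hx0
  have h1q : 0 < 1 - q := by linarith
  have h2q : 0 < 2 - q := by linarith
  have hx0p : 0 < x0 := by positivity
  have hlx : lam * (1 - q) = x0 ^ (2 - q) := by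
    rw [hx0, ← Real.rpow_mul (by positivity), one_div_mul_cancel h2q.ne', Real.rpow_one]
  have hτ2 : 2 * (1 - q) * τ = x0 * (2 - q) := by
    have e : (1 - q) ^ (1 / (2 - q)) = (1 - q) ^ ((q - 1) / (2 - q)) * (1 - q) := by
      rw [← Real.rpow_add_one h1q.ne']; congr 1; field_simp; ring
    rw [hτ, hx0, Real.mul_rpow hl.le h1q.le, e]; ring
  have h0q : (0:ℝ) ^ q = 0 := Real.zero_rpow hq0.ne'
  obtain ⟨x, hx, hm⟩ := scal_exists q lam s hq0 hl hs
  refine ⟨x, hx, hm, fun y hy hyx => ?_⟩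
  have hym : ∀ z, 0 ≤ z → (s - y) ^ 2 + lam * y ^ q ≤ (s - z) ^ 2 + lam * z ^ q :=
    fun z hz => hyx.trans (hm z hz)
  rcases lt_or_gt_of_ne hsτ with h | h
  · have key : ∀ z, 0 ≤ z → (∀ w, 0 ≤ w → (s - z) ^ 2 + lam * z ^ q ≤ (s - w) ^ 2 + lam * w ^ q)
        → z = 0 := by
      intro z hz hzm
      by_contra hne
      have hzp : 0 < z := lt_of_le_of_ne hz (Ne.symm hne)
      have h1 := scal_lt q x0 z hq1 hx0p lam hlx hzp
      have h2 := hzm 0 le_rfl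
      rw [h0q] at h2
      rw [← hτ2] at h1
      have h3 : z ^ 2 + lam * z ^ q ≤ 2 * s * z := by nlinarith
      have h4 : (1 - q) * (z ^ 2 + lam * z ^ q) ≤ (1 - q) * (2 * s * z) := by gcongr
      have h5 : 0 < (1 - q) * z * (τ - s) := by
        have := sub_pos.2 h
        positivity
      nlinarith
    rw [key x hx hm, key y hy hym]
  · have key : ∀ z, 0 ≤ z → (∀ w, 0 ≤ w → (s - z) ^ 2 + lam * z ^ q ≤ (s - w) ^ 2 + lam * w ^ q)
        → 0 < z := by
      intro z hz hzm
      refine lt_of_le_of_ne hz ?_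
      rintro rfl
      have h1 := scal_eq q x0 hx0p lam hlx
      have h2 := hzm x0 hx0p.le
      rw [h0q] at h2
      rw [← hτ2] at h1
      have h3 : 2 * s * x0 ≤ x0 ^ 2 + lam * x0 ^ q := by nlinarith
      have h4 : (1 - q) * (2 * s * x0) ≤ (1 - q) * (x0 ^ 2 + lam * x0 ^ q) := by gcongr
      have h5 : 0 < (1 - q) * x0 * (s - τ) := by
        have := sub_pos.2 h
        positivity
      nlinarith
    rcases lt_trichotomy x y with h' | h' | h'
    · exact (scal_pos_unique q lam s hq0 hq1 hl x y (key x hx hm) h' hm hym).elim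
    · exact h'.symm
    · exact (scal_pos_unique q lam s hq0 hq1 hl y x (key y hy hym) h' hym hm).elim

/-- core inequality -/
theorem core_ineq {n : ℕ} (q lam : ℝ) (hl : 0 < lam) (hq0 : 0 < q) (s t x : Fin n → ℝ)
    (hs : ∀ i, 0 ≤ s i) (ht : ∀ i, 0 ≤ t i)
    (C D : Fin n → Fin n → ℝ) (hC1 : ∀ i, ∑ j, C i j ^ 2 = 1) (hC2 : ∀ j, ∑ i, C i j ^ 2 = 1)
    (hD1 : ∀ i, ∑ j, D i j ^ 2 ≤ 1) (hD2 : ∀ j, ∑ i, D i j ^ 2 ≤ 1)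
    (hm : ∀ i, ∀ y, 0 ≤ y → (s i - x i) ^ 2 + lam * x i ^ q ≤ (s i - y) ^ 2 + lam * y ^ q)
    (hu : ∀ i, ∀ y, 0 ≤ y → (s i - y) ^ 2 + lam * y ^ q ≤ (s i - x i) ^ 2 + lam * x i ^ q → y = x i) :
    (∑ i, ((s i - x i) ^ 2 + lam * x i ^ q) ≤ ∑ i, s i ^ 2 + ∑ j, (t j ^ 2 + lam * t j ^ q)
        - 2 * ∑ i, ∑ j, s i * t j * (C i j * D i j)) ∧
    (∑ i, s i ^ 2 + ∑ j, (t j ^ 2 + lam * t j ^ q)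
        - 2 * ∑ i, ∑ j, s i * t j * (C i j * D i j) ≤ ∑ i, ((s i - x i) ^ 2 + lam * x i ^ q) →
      (∀ i j, C i j ≠ 0 → t j = x i) ∧ (∀ i j, D i j ≠ 0 → t j = x i) ∧
      (∀ i j, 0 < s i → 0 < t j → C i j = D i j) ∧ (∀ i, x i ≠ 0 → ∑ j, D i j ^ 2 = 1)) := by
  set φ : Fin n → ℝ := fun i => (s i - x i) ^ 2 + lam * x i ^ q with hφ
  set T1 := ∑ i, ∑ j, C i j ^ 2 * ((s i - t j) ^ 2 + lam * t j ^ q - φ i) with hT1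
  set T2 := ∑ i, ∑ j, D i j ^ 2 * ((s i - t j) ^ 2 + lam * t j ^ q - φ i) with hT2
  set T3 := ∑ i, (1 - ∑ j, D i j ^ 2) * (s i ^ 2 - φ i) with hT3
  set T4 := ∑ j, (1 - ∑ i, D i j ^ 2) * (t j ^ 2 + lam * t j ^ q) with hT4
  set T5 := ∑ i, ∑ j, s i * t j * (C i j - D i j) ^ 2 with hT5
  set R := ∑ i, ∑ j, s i * t j * (C i j * D i j) with hR
  have exp1 : ∀ E : Fin n → Fin n → ℝ,
      ∑ i, ∑ j, E i j ^ 2 * ((s i - t j) ^ 2 + lam * t j ^ q - φ i)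
      = ∑ i, (∑ j, E i j ^ 2) * (s i ^ 2 - φ i) + ∑ j, (∑ i, E i j ^ 2) * (t j ^ 2 + lam * t j ^ q)
        - 2 * ∑ i, ∑ j, s i * t j * E i j ^ 2 := by
    intro E
    have h2 : ∑ j, (∑ i, E i j ^ 2) * (t j ^ 2 + lam * t j ^ q)
        = ∑ i, ∑ j, E i j ^ 2 * (t j ^ 2 + lam * t j ^ q) := by
      rw [Finset.sum_comm]; simp only [Finset.sum_mul]
    rw [h2]
    simp only [Finset.sum_mul, Finset.mul_sum, ← Finset.sum_add_distrib, ← Finset.sum_sub_distrib]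
    refine Finset.sum_congr rfl fun i _ => Finset.sum_congr rfl fun j _ => ?_
    ring
  have e1 : T1 = ∑ i, (s i ^ 2 - φ i) + ∑ j, (t j ^ 2 + lam * t j ^ q)
        - 2 * ∑ i, ∑ j, s i * t j * C i j ^ 2 := by
    rw [hT1, exp1]; simp only [hC1, hC2, one_mul]
  have e2 : T2 + T3 + T4 = ∑ i, (s i ^ 2 - φ i) + ∑ j, (t j ^ 2 + lam * t j ^ q)
        - 2 * ∑ i, ∑ j, s i * t j * D i j ^ 2 := by
    rw [hT2, exp1, hT3, hT4]; simp only [sub_mul, one_mul, Finset.sum_sub_distrib]; ring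
  have e5 : T5 = ∑ i, ∑ j, s i * t j * C i j ^ 2 + ∑ i, ∑ j, s i * t j * D i j ^ 2 - 2 * R := by
    rw [hT5, hR]
    simp only [Finset.mul_sum, ← Finset.sum_add_distrib, ← Finset.sum_sub_distrib]
    refine Finset.sum_congr rfl fun i _ => Finset.sum_congr rfl fun j _ => ?_
    ring
  have e6 : ∑ i, (s i ^ 2 - φ i) = ∑ i, s i ^ 2 - ∑ i, φ i := Finset.sum_sub_distrib _ _
  have tot : 2 * (∑ i, s i ^ 2 + ∑ j, (t j ^ 2 + lam * t j ^ q) - 2 * R - ∑ i, φ i)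
      = T1 + T2 + T3 + T4 + 2 * T5 := by linarith
  have h0q : (0:ℝ) ^ q = 0 := Real.zero_rpow hq0.ne'
  have hφs : ∀ i, φ i ≤ s i ^ 2 := by
    intro i
    have := hm i 0 le_rfl
    rw [h0q] at this
    simpa using this
  have p1 : ∀ E : Fin n → Fin n → ℝ, ∀ i j,
      0 ≤ E i j ^ 2 * ((s i - t j) ^ 2 + lam * t j ^ q - φ i) := fun E i j =>
    mul_nonneg (sq_nonneg _) (sub_nonneg.2 (hm i _ (ht j)))
  have p3 : ∀ i, 0 ≤ (1 - ∑ j, D i j ^ 2) * (s i ^ 2 - φ i) := fun i =>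
    mul_nonneg (sub_nonneg.2 (hD1 i)) (sub_nonneg.2 (hφs i))
  have p4 : ∀ j, 0 ≤ (1 - ∑ i, D i j ^ 2) * (t j ^ 2 + lam * t j ^ q) := fun j =>
    mul_nonneg (sub_nonneg.2 (hD2 j)) (by have := Real.rpow_nonneg (ht j) q; positivity)
  have p5 : ∀ i j, 0 ≤ s i * t j * (C i j - D i j) ^ 2 := fun i j =>
    mul_nonneg (mul_nonneg (hs i) (ht j)) (sq_nonneg _)
  have n1 : 0 ≤ T1 := Finset.sum_nonneg fun i _ => Finset.sum_nonneg fun j _ => p1 C i j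
  have n2 : 0 ≤ T2 := Finset.sum_nonneg fun i _ => Finset.sum_nonneg fun j _ => p1 D i j
  have n3 : 0 ≤ T3 := Finset.sum_nonneg fun i _ => p3 i
  have n4 : 0 ≤ T4 := Finset.sum_nonneg fun j _ => p4 j
  have n5 : 0 ≤ T5 := Finset.sum_nonneg fun i _ => Finset.sum_nonneg fun j _ => p5 i j
  refine ⟨by linarith, fun hle => ?_⟩
  have z1 : T1 = 0 := by linarith
  have z2 : T2 = 0 := by linarith
  have z3 : T3 = 0 := by linarith
  have z5 : T5 = 0 := by linarith
  have dbl : ∀ f : Fin n → Fin n → ℝ, (∀ i j, 0 ≤ f i j) → ∑ i, ∑ j, f i j = 0 → ∀ i j, f i j = 0 := by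
    intro f hf h i j
    have h1 := (Finset.sum_eq_zero_iff_of_nonneg
      (fun i _ => Finset.sum_nonneg fun j _ => hf i j)).1 h i (Finset.mem_univ i)
    exact (Finset.sum_eq_zero_iff_of_nonneg (fun j _ => hf i j)).1 h1 j (Finset.mem_univ j)
  refine ⟨fun i j hc => ?_, fun i j hc => ?_, fun i j h1 h2 => ?_, fun i hxi => ?_⟩
  · have := dbl _ (p1 C) z1 i j
    rcases mul_eq_zero.1 this with h | h
    · exact (hc (pow_eq_zero_iff two_ne_zero |>.1 h)).elim
    · exact hu i _ (ht j) (by linarith)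
  · have := dbl _ (p1 D) z2 i j
    rcases mul_eq_zero.1 this with h | h
    · exact (hc (pow_eq_zero_iff two_ne_zero |>.1 h)).elim
    · exact hu i _ (ht j) (by linarith)
  · have := dbl _ p5 z5 i j
    rcases mul_eq_zero.1 this with h | h
    · exact absurd h (mul_pos h1 h2).ne'
    · exact sub_eq_zero.1 (pow_eq_zero_iff two_ne_zero |>.1 h)
  · have := (Finset.sum_eq_zero_iff_of_nonneg (fun i _ => p3 i)).1 z3 i (Finset.mem_univ i)
    rcases mul_eq_zero.1 this with h | h
    · linarith
    · refine absurd (hu i 0 le_rfl ?_).symm hxi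
      rw [h0q]
      simp only [sub_zero, mul_zero, add_zero]
      linarith

noncomputable def evs {m n : ℕ} (A : Matrix (Fin m) (Fin n) ℝ) : Fin n → ℝ :=
  fun j => Real.sqrt ((Matrix.isHermitian_conjTranspose_mul_self A).eigenvalues j)

theorem evs_nonneg {m n : ℕ} (A : Matrix (Fin m) (Fin n) ℝ) (j : Fin n) : 0 ≤ evs A j :=
  Real.sqrt_nonneg _

theorem evs_sq {m n : ℕ} (A : Matrix (Fin m) (Fin n) ℝ) (j : Fin n) :
    evs A j ^ 2 = (Matrix.isHermitian_conjTranspose_mul_self A).eigenvalues j :=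
  Real.sq_sqrt ((Matrix.posSemidef_conjTranspose_mul_self A).eigenvalues_nonneg j)

theorem evs_card {m n : ℕ} (A : Matrix (Fin m) (Fin n) ℝ) :
    (Finset.univ.filter fun j => evs A j ≠ 0).card ≤ m := by
  have h := (Matrix.isHermitian_conjTranspose_mul_self A).rank_eq_card_non_zero_eigs
  rw [Matrix.rank_conjTranspose_mul_self] at h
  have h2 : A.rank ≤ m := by simpa using A.rank_le_height
  rw [Fintype.card_subtype] at h
  refine le_trans (le_of_eq ?_) (h ▸ h2)
  congr 1
  ext j
  simp only [Finset.mem_filter, Finset.mem_univ, true_and]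
  rw [← evs_sq]
  simp

theorem sorted_zero {m n : ℕ} (A : Matrix (Fin m) (Fin n) ℝ) (k : Fin n) (hk : m ≤ k.val) :
    evs A (Tuple.sort (evs A) k.rev) = 0 := by
  by_contra hne
  have hmono : Monotone (evs A ∘ Tuple.sort (evs A)) := Tuple.monotone_sort _
  have hsub : (Finset.Ici k.rev).map (Tuple.sort (evs A)).toEmbedding
      ⊆ Finset.univ.filter fun j => evs A j ≠ 0 := by
    intro j hj
    simp only [Finset.mem_map, Finset.mem_Ici, Equiv.coe_toEmbedding] at hj
    obtain ⟨l, hl, rfl⟩ := hj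
    simp only [Finset.mem_filter, Finset.mem_univ, true_and]
    have h1 := hmono hl
    have h2 : 0 < evs A (Tuple.sort (evs A) k.rev) := lt_of_le_of_ne (evs_nonneg _ _) (Ne.symm hne)
    exact (h2.trans_le h1).ne'
  have hc := (Finset.card_le_card hsub).trans (evs_card A)
  rw [Finset.card_map, Fin.card_Ici, Fin.val_rev] at hc
  have := k.isLt
  omega

theorem singularValue_eq {m n : ℕ} (A : Matrix (Fin m) (Fin n) ℝ) (i : Fin (min m n)) :
    singularValue A i = evs A (Tuple.sort (evs A) (Fin.castLE (Nat.min_le_right m n) i).rev) := rfl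

theorem schattenPow_eq {m n : ℕ} (A : Matrix (Fin m) (Fin n) ℝ) (q : ℝ) (hq : 0 < q) :
    schattenPow A q = ∑ j, evs A j ^ q := by
  unfold schattenPow
  have h1 : ∑ j, evs A j ^ q = ∑ k : Fin n, evs A (Tuple.sort (evs A) k.rev) ^ q :=
    (Equiv.sum_comp (Fin.revPerm.trans (Tuple.sort (evs A))) (fun j => evs A j ^ q)).symm
  rw [h1]
  refine Fintype.sum_of_injective (Fin.castLE (Nat.min_le_right m n)) (Fin.castLE_injective _) _ _
    ?_ (fun i => by rw [singularValue_eq])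
  intro k hk
  rw [sorted_zero A k, Real.zero_rpow hq.ne']
  by_contra hlt
  exact hk ⟨⟨k, by have := k.isLt; omega⟩, rfl⟩

theorem evs_ne {m n : ℕ} (A : Matrix (Fin m) (Fin n) ℝ) (τ : ℝ) (hτ : 0 < τ)
    (h : ∀ i, singularValue A i ≠ τ) (j : Fin n) : evs A j ≠ τ := by
  obtain ⟨k, rfl⟩ : ∃ k : Fin n, Tuple.sort (evs A) k.rev = j :=
    ⟨((Tuple.sort (evs A)).symm j).rev, by simp⟩
  by_cases hk : m ≤ k.val
  · rw [sorted_zero A k hk]; exact hτ.ne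
  · exact h ⟨k, by have := k.isLt; omega⟩

theorem frob_sq {m n : ℕ} (A : Matrix (Fin m) (Fin n) ℝ) :
    frobNorm A ^ 2 = (Aᵀ * A).trace := by
  unfold frobNorm
  rw [Real.sq_sqrt (by positivity), Finset.sum_comm]
  simp [Matrix.trace, Matrix.mul_apply, sq]

theorem spec {m n : ℕ} (A : Matrix (Fin m) (Fin n) ℝ) :
    ∃ V : Matrix (Fin n) (Fin n) ℝ, V * Vᵀ = 1 ∧ Vᵀ * V = 1 ∧
      Aᵀ * A = V * diagonal (fun j => evs A j ^ 2) * Vᵀ := by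
  have hA := Matrix.isHermitian_conjTranspose_mul_self A
  refine ⟨hA.eigenvectorUnitary, ?_, ?_, ?_⟩
  · exact Unitary.coe_mul_star_self hA.eigenvectorUnitary
  · exact Unitary.coe_star_mul_self hA.eigenvectorUnitary
  · have := hA.spectral_theorem
    rw [Unitary.conjStarAlgAut_apply] at this
    simp only [evs_sq]
    exact this

theorem svd {m n : ℕ} (A : Matrix (Fin m) (Fin n) ℝ) :
    ∃ (U : Matrix (Fin m) (Fin n) ℝ) (V : Matrix (Fin n) (Fin n) ℝ), V * Vᵀ = 1 ∧ Vᵀ * V = 1 ∧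
      Uᵀ * U = diagonal (fun j => if evs A j = 0 then (0 : ℝ) else 1) ∧
      U * diagonal (fun j => if evs A j = 0 then (0 : ℝ) else 1) = U ∧
      A = U * diagonal (evs A) * Vᵀ := by
  obtain ⟨V, h1, h2, h3⟩ := spec A
  have hG : (A * V)ᵀ * (A * V) = diagonal (fun j => evs A j ^ 2) := by
    calc (A * V)ᵀ * (A * V) = Vᵀ * (Aᵀ * A) * V := by simp only [transpose_mul, Matrix.mul_assoc]
      _ = (Vᵀ * V) * diagonal (fun j => evs A j ^ 2) * (Vᵀ * V) := by
        rw [h3]; simp only [Matrix.mul_assoc]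
      _ = _ := by rw [h2, Matrix.one_mul, Matrix.mul_one]
  have hcol : ∀ i j, evs A j = 0 → (A * V) i j = 0 := by
    intro i j hj
    have h := congrFun (congrFun hG j) j
    rw [Matrix.mul_apply, diagonal_apply_eq, hj] at h
    simp only [transpose_apply] at h
    have h4 := (Finset.sum_eq_zero_iff_of_nonneg
      (fun i _ => mul_self_nonneg ((A * V) i j))).1 (by simpa using h) i (Finset.mem_univ i)
    exact mul_self_eq_zero.1 h4
  refine ⟨A * V * diagonal (fun j => (evs A j)⁻¹), V, h1, h2, ?_, ?_, ?_⟩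
  · rw [transpose_mul, diagonal_transpose, Matrix.mul_assoc, ← Matrix.mul_assoc _ (A * V), hG,
      diagonal_mul_diagonal, diagonal_mul_diagonal]
    congr 1; ext j
    split_ifs with h
    · simp [h]
    · field_simp
  · rw [Matrix.mul_assoc (A * V), diagonal_mul_diagonal]
    congr 2; ext j
    split_ifs with h <;> simp [h]
  · have : A * V * diagonal (fun j => (evs A j)⁻¹) * diagonal (evs A) = A * V := by
      ext i j
      rw [mul_diagonal, mul_diagonal]
      by_cases h : evs A j = 0
      · rw [h, hcol i j h]; simp
      · field_simp
    rw [this, Matrix.mul_assoc, h1, Matrix.mul_one]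

theorem evs_sum {m n : ℕ} (A : Matrix (Fin m) (Fin n) ℝ) (V : Matrix (Fin n) (Fin n) ℝ)
    (h1 : V * Vᵀ = 1) (h2 : Vᵀ * V = 1) (x : Fin n → ℝ) (hx : ∀ i, 0 ≤ x i)
    (h : Aᵀ * A = V * diagonal (fun j => x j ^ 2) * Vᵀ) (q : ℝ) :
    ∑ j, evs A j ^ q = ∑ j, x j ^ q := by
  obtain ⟨B, k1, k2, k3⟩ := spec A
  set C := Vᵀ * B with hC
  have c1 : C * Cᵀ = 1 := by
    rw [hC, transpose_mul, transpose_transpose, Matrix.mul_assoc, ← Matrix.mul_assoc B, k1,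
      Matrix.one_mul, h2]
  have c2 : Cᵀ * C = 1 := by
    rw [hC, transpose_mul, transpose_transpose, Matrix.mul_assoc, ← Matrix.mul_assoc V, h1,
      Matrix.one_mul, k2]
  have key : diagonal (fun j => x j ^ 2) * C = C * diagonal (fun j => evs A j ^ 2) := by
    calc _ = (Vᵀ * V) * diagonal (fun j => x j ^ 2) * (Vᵀ * B) := by rw [h2, Matrix.one_mul]
      _ = Vᵀ * (V * diagonal (fun j => x j ^ 2) * Vᵀ) * B := by simp only [Matrix.mul_assoc]
      _ = Vᵀ * (B * diagonal (fun j => evs A j ^ 2) * Bᵀ) * B := by rw [← h, k3]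
      _ = Vᵀ * B * diagonal (fun j => evs A j ^ 2) * (Bᵀ * B) := by simp only [Matrix.mul_assoc]
      _ = _ := by rw [k2, Matrix.mul_one]
  have hij : ∀ i j, C i j ^ 2 * evs A j ^ q = C i j ^ 2 * x i ^ q := by
    intro i j
    have := congrFun (congrFun key i) j
    rw [diagonal_mul, mul_diagonal] at this
    by_cases hc : C i j = 0
    · simp [hc]
    · have e : x i ^ 2 = evs A j ^ 2 := by
        rw [mul_comm] at this
        exact mul_left_cancel₀ hc this
      rw [(sq_eq_sq₀ (hx i) (evs_nonneg A j)).1 e]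
  have r1 : ∀ i, ∑ j, C i j ^ 2 = 1 := fun i => by
    have := congrFun (congrFun c1 i) i
    simpa [Matrix.mul_apply, sq] using this
  have r2 : ∀ j, ∑ i, C i j ^ 2 = 1 := fun i => by
    have := congrFun (congrFun c2 i) i
    simpa [Matrix.mul_apply, sq] using this
  calc ∑ j, evs A j ^ q = ∑ j, ∑ i, C i j ^ 2 * evs A j ^ q := by
        simp only [← Finset.sum_mul, r2, one_mul]
    _ = ∑ j, ∑ i, C i j ^ 2 * x i ^ q := by simp only [hij]
    _ = ∑ i, ∑ j, C i j ^ 2 * x i ^ q := Finset.sum_comm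
    _ = _ := by simp only [← Finset.sum_mul, r1, one_mul]

/-- Bessel -/
theorem bessel {m n : ℕ} (U A : Matrix (Fin m) (Fin n) ℝ) (e : Fin n → ℝ)
    (hA : Aᵀ * A = diagonal e) (hAe : A * diagonal e = A) (i : Fin n) :
    ∑ k, (U k i - (A * (Aᵀ * U)) k i) ^ 2 = (Uᵀ * U) i i - ∑ j, (Uᵀ * A) i j ^ 2 := by
  have e1 : ∑ k, (U k i - (A * (Aᵀ * U)) k i) ^ 2
      = ((U - A * (Aᵀ * U))ᵀ * (U - A * (Aᵀ * U))) i i := by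
    rw [Matrix.mul_apply]; simp only [transpose_apply, Matrix.sub_apply, sq]
  have e2 : ∑ j, (Uᵀ * A) i j ^ 2 = ((Uᵀ * A) * (Uᵀ * A)ᵀ) i i := by
    rw [Matrix.mul_apply]; simp only [transpose_apply, sq]
  have e3 : (U - A * (Aᵀ * U))ᵀ * (U - A * (Aᵀ * U)) = Uᵀ * U - (Uᵀ * A) * (Uᵀ * A)ᵀ := by
    have : (A * (Aᵀ * U))ᵀ * (A * (Aᵀ * U)) = (Uᵀ * A) * (Uᵀ * A)ᵀ := by
      calc (A * (Aᵀ * U))ᵀ * (A * (Aᵀ * U)) = Uᵀ * (A * (Aᵀ * A)) * (Aᵀ * U) := by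
            simp only [transpose_mul, transpose_transpose, Matrix.mul_assoc]
        _ = _ := by
          rw [hA, hAe]; simp only [transpose_mul, transpose_transpose]
    rw [transpose_sub, Matrix.sub_mul, Matrix.mul_sub, Matrix.mul_sub, this]
    simp only [transpose_mul, transpose_transpose, Matrix.mul_assoc]
    abel
  rw [e1, e2, e3]; rfl

theorem frob_svd {m n : ℕ} (U : Matrix (Fin m) (Fin n) ℝ) (V : Matrix (Fin n) (Fin n) ℝ)
    (e x : Fin n → ℝ) (h2 : Vᵀ * V = 1) (hU : Uᵀ * U = diagonal e) (he : ∀ i, e i * x i = x i) :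
    (U * diagonal x * Vᵀ)ᵀ * (U * diagonal x * Vᵀ) = V * diagonal (fun j => x j ^ 2) * Vᵀ ∧
    frobNorm (U * diagonal x * Vᵀ) ^ 2 = ∑ i, x i ^ 2 := by
  have h : (U * diagonal x * Vᵀ)ᵀ * (U * diagonal x * Vᵀ) = V * diagonal (fun j => x j ^ 2) * Vᵀ := by
    calc _ = V * (diagonal x * ((Uᵀ * U) * diagonal x)) * Vᵀ := by
          simp only [transpose_mul, transpose_transpose, diagonal_transpose, Matrix.mul_assoc]
      _ = _ := by
        rw [hU, diagonal_mul_diagonal, diagonal_mul_diagonal]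
        simp only [he, sq]
  refine ⟨h, ?_⟩
  rw [frob_sq, h, Matrix.trace_mul_comm, ← Matrix.mul_assoc, h2, Matrix.one_mul, trace_diagonal]

theorem frob_diff {m n : ℕ} (U A : Matrix (Fin m) (Fin n) ℝ) (V B : Matrix (Fin n) (Fin n) ℝ)
    (e f s t : Fin n → ℝ) (hV : Vᵀ * V = 1) (hB : Bᵀ * B = 1)
    (hU : Uᵀ * U = diagonal e) (hA : Aᵀ * A = diagonal f)
    (he : ∀ i, e i * s i = s i) (hf : ∀ i, f i * t i = t i) :
    frobNorm (U * diagonal s * Vᵀ - A * diagonal t * Bᵀ) ^ 2 =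
      ∑ i, s i ^ 2 + ∑ j, t j ^ 2
        - 2 * ∑ i, ∑ j, s i * t j * ((Vᵀ * B) i j * (Uᵀ * A) i j) := by
  set Y := U * diagonal s * Vᵀ with hY
  set M := A * diagonal t * Bᵀ with hM
  have h1 := (frob_svd U V e s hV hU he).2
  have h2 := (frob_svd A B f t hB hA hf).2
  have h3 : (Yᵀ * M).trace = ∑ i, ∑ j, s i * t j * ((Vᵀ * B) i j * (Uᵀ * A) i j) := by
    have e1 : Yᵀ * M = V * (diagonal s * (Uᵀ * A) * diagonal t * Bᵀ) := by
      simp only [hY, hM, transpose_mul, transpose_transpose, diagonal_transpose, Matrix.mul_assoc]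
    have e2 : (diagonal s * (Uᵀ * A) * diagonal t * Bᵀ) * V
        = (diagonal s * (Uᵀ * A) * diagonal t) * (Vᵀ * B)ᵀ := by
      rw [transpose_mul, transpose_transpose, Matrix.mul_assoc _ Bᵀ]
    rw [e1, Matrix.trace_mul_comm, e2, Matrix.trace]
    refine Finset.sum_congr rfl fun i _ => ?_
    rw [Matrix.diag_apply, Matrix.mul_apply]
    refine Finset.sum_congr rfl fun j _ => ?_
    rw [mul_diagonal, diagonal_mul, transpose_apply]; ring
  have h4 : (Mᵀ * Y).trace = (Yᵀ * M).trace := by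
    rw [← Matrix.trace_transpose, transpose_mul, transpose_transpose]
  rw [frob_sq] at h1 h2
  rw [frob_sq, ← h3, transpose_sub, Matrix.sub_mul, Matrix.mul_sub, Matrix.mul_sub,
    Matrix.trace_sub, Matrix.trace_sub, Matrix.trace_sub, h4, h1, h2]
  ring

/-- For `L ≥ 3`, `λ > 0`, `q = 2/L` and threshold
`τ = (1 − q/2)·λ^{1/(2−q)}·(1 − q)^{(q−1)/(2−q)}`: if no singular value of `M♮`
equals `τ`, then the Schatten-regularized objective
`𝓛_{M♮}(M) = ‖M♮ − M‖_F² + λ‖M‖_{S^{2/L}}^{2/L}` has exactly one global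
minimizer over `ℝ^{m×n}`. -/
theorem stmt6 (L : ℕ) (hL : 3 ≤ L) (lam : ℝ) (hlam : 0 < lam) (q τ : ℝ)
    (hq : q = 2 / L)
    (hτ : τ = (1 - q / 2) * lam ^ (1 / (2 - q)) * (1 - q) ^ ((q - 1) / (2 - q)))
    (m n : ℕ) (Mnat : Matrix (Fin m) (Fin n) ℝ)
    (hσ : ∀ i : Fin (min m n), singularValue Mnat i ≠ τ) :
    ∃! Mstar : Matrix (Fin m) (Fin n) ℝ,
      ∀ X : Matrix (Fin m) (Fin n) ℝ,
        schattenLoss L lam Mnat Mstar ≤ schattenLoss L lam Mnat X := by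
  have hL0 : (0:ℝ) < L := by positivity
  have hL3 : (3:ℝ) ≤ L := by exact_mod_cast hL
  have hq0 : 0 < q := by rw [hq]; positivity
  have hq1 : q < 1 := by rw [hq, div_lt_one hL0]; linarith
  have hτ0 : 0 < τ := by
    have : 0 < 1 - q := by linarith
    have : 0 < 1 - q / 2 := by linarith
    rw [hτ]; positivity
  have h0q : (0:ℝ) ^ q = 0 := Real.zero_rpow hq0.ne'
  set s := evs Mnat with hs
  have hs0 : ∀ i, 0 ≤ s i := evs_nonneg Mnat
  choose x hx hm hu using fun i => scal_main q lam τ (s i) hq0 hq1 hlam hτ (hs0 i)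
    (evs_ne Mnat τ hτ0 hσ i)
  have hsx : ∀ i, s i = 0 → x i = 0 := by
    intro i hi
    refine (hu i 0 le_rfl ?_).symm
    rw [h0q, hi]
    have := Real.rpow_nonneg (hx i) q
    have h2 : 0 ≤ lam * x i ^ q := by positivity
    nlinarith [sq_nonneg (0 - x i)]
  obtain ⟨U, V, hV1, hV2, hU, hUe, hY⟩ := svd Mnat
  rw [← hs] at hU hUe hY
  have hloss : ∀ M, schattenLoss L lam Mnat M = frobNorm (Mnat - M) ^ 2 + lam * ∑ j, evs M j ^ q := by
    intro M
    unfold schattenLoss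
    rw [← hq, schattenPow_eq M q hq0]
  have hM0 : schattenLoss L lam Mnat (U * diagonal x * Vᵀ)
      = ∑ i, ((s i - x i) ^ 2 + lam * x i ^ q) := by
    rw [hloss]
    have e1 := frob_svd U V _ x hV2 hU (by
      intro i
      by_cases h : s i = 0
      · simp [h, hsx i h]
      · simp [h])
    have e2 := frob_svd U V _ (fun i => s i - x i) hV2 hU (by
      intro i
      by_cases h : s i = 0
      · simp [h, hsx i h]
      · simp [h])
    rw [evs_sum _ V hV1 hV2 x hx e1.1 q]
    have e3 : Mnat - U * diagonal x * Vᵀ = U * diagonal (fun i => s i - x i) * Vᵀ := by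
      rw [← diagonal_sub, Matrix.mul_sub, Matrix.sub_mul, ← hY]
    rw [e3, e2.2, Finset.sum_add_distrib, Finset.mul_sum]
  have main : ∀ M, (∑ i, ((s i - x i) ^ 2 + lam * x i ^ q) ≤ schattenLoss L lam Mnat M) ∧
      (schattenLoss L lam Mnat M ≤ ∑ i, ((s i - x i) ^ 2 + lam * x i ^ q) →
        M = U * diagonal x * Vᵀ) := by
    intro M
    obtain ⟨A, B, hB1, hB2, hA, hAe, hM⟩ := svd M
    set t := evs M with ht
    have ht0 : ∀ i, 0 ≤ t i := evs_nonneg M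
    have hfd := frob_diff U A V B _ _ s t hV2 hB2 hU hA (by intro i; by_cases h : s i = 0 <;> simp [h])
      (by intro i; by_cases h : t i = 0 <;> simp [h])
    rw [← hY, ← hM] at hfd
    have hl : schattenLoss L lam Mnat M = ∑ i, s i ^ 2 + ∑ j, (t j ^ 2 + lam * t j ^ q)
        - 2 * ∑ i, ∑ j, s i * t j * ((Vᵀ * B) i j * (Uᵀ * A) i j) := by
      rw [hloss, hfd, Finset.sum_add_distrib, ← Finset.mul_sum Finset.univ (fun j => t j ^ q) lam, ← ht]; ring
    have c1 : (Vᵀ * B) * (Vᵀ * B)ᵀ = 1 := by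
      rw [transpose_mul, transpose_transpose, Matrix.mul_assoc, ← Matrix.mul_assoc B, hB1,
        Matrix.one_mul, hV2]
    have c2 : (Vᵀ * B)ᵀ * (Vᵀ * B) = 1 := by
      rw [transpose_mul, transpose_transpose, Matrix.mul_assoc, ← Matrix.mul_assoc V, hV1,
        Matrix.one_mul, hB2]
    have r1 : ∀ i, ∑ j, (Vᵀ * B) i j ^ 2 = 1 := fun i => by
      have := congrFun (congrFun c1 i) i
      rw [Matrix.mul_apply, one_apply_eq] at this
      simpa only [transpose_apply, ← sq] using this
    have r2 : ∀ j, ∑ i, (Vᵀ * B) i j ^ 2 = 1 := fun i => by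
      have := congrFun (congrFun c2 i) i
      rw [Matrix.mul_apply, one_apply_eq] at this
      simpa only [transpose_apply, ← sq] using this
    have bU := bessel U A _ hA hAe
    have bA := bessel A U _ hU hUe
    have dU : ∀ i, (Uᵀ * U) i i ≤ 1 := by
      intro i; rw [hU, diagonal_apply_eq]; split_ifs <;> norm_num
    have dA : ∀ i, (Aᵀ * A) i i ≤ 1 := by
      intro i; rw [hA, diagonal_apply_eq]; split_ifs <;> norm_num
    have d1 : ∀ i, ∑ j, (Uᵀ * A) i j ^ 2 ≤ 1 := by
      intro i
      have h1 := bU i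
      have h2 : 0 ≤ ∑ k, (U k i - (A * (Aᵀ * U)) k i) ^ 2 := by positivity
      linarith [dU i]
    have d2 : ∀ j, ∑ i, (Uᵀ * A) i j ^ 2 ≤ 1 := by
      intro i
      have h1 := bA i
      have h2 : 0 ≤ ∑ k, (A k i - (U * (Uᵀ * A)) k i) ^ 2 := by positivity
      have h3 : ∀ j, (Aᵀ * U) i j = (Uᵀ * A) j i := by
        intro j
        rw [← transpose_apply (Uᵀ * A), transpose_mul, transpose_transpose]
      simp only [h3] at h1
      linarith [dA i]
    have core := core_ineq q lam hlam hq0 s t x hs0 ht0 (Vᵀ * B) (Uᵀ * A) r1 r2 d1 d2 hm hu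
    rw [← hl] at core
    refine ⟨core.1, fun hle => ?_⟩
    obtain ⟨k1, k2, k3, k4⟩ := core.2 hle
    have hMV : M * V = U * diagonal x := by
      have e1 : M * V = A * diagonal t * (Vᵀ * B)ᵀ := by
        rw [transpose_mul, transpose_transpose, ← Matrix.mul_assoc, ← hM]
      rw [e1]
      ext k i
      rw [Matrix.mul_apply, mul_diagonal]
      simp only [mul_diagonal, transpose_apply]
      have e2 : ∀ j, A k j * t j * (Vᵀ * B) i j = A k j * (Vᵀ * B) i j * x i := by
        intro j
        by_cases h : (Vᵀ * B) i j = 0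
        · rw [h]; ring
        · rw [k1 i j h]; ring
      simp only [e2]
      rw [← Finset.sum_mul]
      by_cases hxi : x i = 0
      · rw [hxi]; ring
      · congr 1
        have hxp : 0 < x i := lt_of_le_of_ne (hx i) (Ne.symm hxi)
        have hsp : 0 < s i := lt_of_le_of_ne (hs0 i) (fun h => hxi (hsx i h.symm))
        have e3 : ∀ j, (Vᵀ * B) i j = (Uᵀ * A) i j := by
          intro j
          by_cases hc : (Vᵀ * B) i j = 0
          · by_cases hd : (Uᵀ * A) i j = 0
            · rw [hc, hd]
            · exact k3 i j hsp (by rw [k2 i j hd]; exact hxp)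
          · exact k3 i j hsp (by rw [k1 i j hc]; exact hxp)
        have h1 := bU i
        have h2 : 0 ≤ ∑ k, (U k i - (A * (Aᵀ * U)) k i) ^ 2 := by positivity
        have h3 : ∑ k, (U k i - (A * (Aᵀ * U)) k i) ^ 2 = 0 := by
          have := k4 i hxi
          linarith [dU i]
        have h4 := (Finset.sum_eq_zero_iff_of_nonneg (fun k _ => sq_nonneg _)).1 h3 k
          (Finset.mem_univ k)
        have h5 : U k i = (A * (Aᵀ * U)) k i := sub_eq_zero.1 (pow_eq_zero_iff two_ne_zero |>.1 h4)
        rw [h5, Matrix.mul_apply]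
        refine Finset.sum_congr rfl fun j _ => ?_
        rw [e3, ← transpose_apply (Uᵀ * A), transpose_mul, transpose_transpose]
    calc M = M * V * Vᵀ := by rw [Matrix.mul_assoc, hV1, Matrix.mul_one]
      _ = _ := by rw [hMV]
  refine ⟨U * diagonal x * Vᵀ, fun X => ?_, fun M hMmin => ?_⟩
  · simp only [hM0]; exact (main X).1
  · exact (main M).2 (hM0 ▸ hMmin (U * diagonal x * Vᵀ))
end
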